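/- If I(α,β) > 1, then exact recovery in HSBM(n,p,q;k) is possible: there exists an estimator σ̂ mapping k-uniform hypergraphs on [n] to {±1}^n such that Pr_{(σ,ℋ)∼HSBM(n,p,q;k)}(σ̂(ℋ) ∉ {σ, −σ}) = o(1) as n → ∞. -/

import Mathlib

open Finset Filter Matrix

open scoped Classical

/-- The `k`-element subsets of `[n]`, i.e. the potential hyperedges. -/
abbrev KSet (n k : ℕ) := {e : Finset (Fin n) // e.card = k}

/-- A `±1` label vector (encoded by `Bool`) is balanced if it has equally many
`+1`'s (`true`) and `-1`'s (`false`). -/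
abbrev balanced {n : ℕ} (σ : Fin n → Bool) : Prop :=
  2 * (Finset.univ.filter (fun i => σ i = true)).card = n

/-- `e` is in-cluster w.r.t. `σ`: `σ` is constant on `e`. -/
abbrev inCluster {n : ℕ} (σ : Fin n → Bool) (e : Finset (Fin n)) : Prop :=
  ∀ i ∈ e, ∀ j ∈ e, σ i = σ j

/-- Probability that `e` appears as an edge, given the labels `σ`. -/
noncomputable def edgeP {n : ℕ} (p q : ℝ) (σ : Fin n → Bool) (e : Finset (Fin n)) : ℝ :=
  if inCluster σ e then p else q

/-- Probability of observing exactly the hypergraph with edge-indicator `E`, given labels `σ`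
(edges appear independently). -/
noncomputable def hypProb {n k : ℕ} (p q : ℝ) (σ : Fin n → Bool) (E : KSet n k → Bool) : ℝ :=
  ∏ e : KSet n k, if E e then edgeP p q σ e.1 else 1 - edgeP p q σ e.1

/-- Uniform prior on balanced label vectors. -/
noncomputable def sigProb (n : ℕ) (σ : Fin n → Bool) : ℝ :=
  if balanced σ then 1 / ((Finset.univ.filter (fun τ : Fin n → Bool => balanced τ)).card : ℝ)
  else 0

/-- Probability of an event `P` under the joint law `HSBM(n,p,q;k)` of `(σ, ℋ)`. -/
noncomputable def prEvent (n k : ℕ) (p q : ℝ)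
    (P : (Fin n → Bool) → (KSet n k → Bool) → Prop) : ℝ :=
  ∑ σ : Fin n → Bool, ∑ E : KSet n k → Bool,
    sigProb n σ * hypProb p q σ E * (if P σ E then 1 else 0)

/-- Global sign flip. -/
def negB {n : ℕ} (σ : Fin n → Bool) : Fin n → Bool := fun i => !(σ i)

/-- The edge probability parameter `α · log n / C(n-1, k-1)`. -/
noncomputable def pParam (k : ℕ) (α : ℝ) (n : ℕ) : ℝ :=
  α * Real.log n / ((n - 1).choose (k - 1) : ℝ)

lemma bc_le (p q : ℝ) (hp : 0 ≤ p) (hq : 0 ≤ q) (hp1 : p ≤ 1) (hq1 : q ≤ 1) :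
    √(p * q) + √((1 - p) * (1 - q)) ≤ Real.exp (-((√p - √q) ^ 2 / 2)) := by
  have h1 : √((1 - p) * (1 - q)) ≤ 1 - (p + q) / 2 := by
    apply Real.sqrt_le_iff.2
    constructor
    · linarith
    · nlinarith [sq_nonneg (p - q)]
  have h2 := Real.add_one_le_exp (-((√p - √q) ^ 2 / 2))
  have h3 : √(p * q) = √p * √q := Real.sqrt_mul hp q
  have h4 := Real.sq_sqrt hp
  have h5 := Real.sq_sqrt hq
  nlinarith

lemma edgeP_mem {n : ℕ} (p q : ℝ) (hp : 0 ≤ p) (hq : 0 ≤ q) (hp1 : p ≤ 1) (hq1 : q ≤ 1)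
    (σ : Fin n → Bool) (e : Finset (Fin n)) : 0 ≤ edgeP p q σ e ∧ edgeP p q σ e ≤ 1 := by
  unfold edgeP
  split_ifs <;> constructor <;> assumption

lemma hypProb_nonneg {n k : ℕ} (p q : ℝ) (hp : 0 ≤ p) (hq : 0 ≤ q) (hp1 : p ≤ 1) (hq1 : q ≤ 1)
    (σ : Fin n → Bool) (E : KSet n k → Bool) : 0 ≤ hypProb p q σ E := by
  unfold hypProb
  apply Finset.prod_nonneg
  intro e _
  have := edgeP_mem p q hp hq hp1 hq1 σ e.1
  split_ifs <;> linarith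

/-- Number of potential edges whose status differs. -/
noncomputable def dcard {n : ℕ} (k : ℕ) (σ τ : Fin n → Bool) : ℕ :=
  (Finset.univ.filter (fun e : KSet n k => ¬ (inCluster σ e.1 ↔ inCluster τ e.1))).card

lemma sum_sqrt_le {n k : ℕ} (p q : ℝ) (hp : 0 ≤ p) (hq : 0 ≤ q) (hp1 : p ≤ 1) (hq1 : q ≤ 1)
    (σ τ : Fin n → Bool) :
    ∑ E : KSet n k → Bool, √(hypProb p q σ E * hypProb p q τ E)
      ≤ Real.exp (-((√p - √q) ^ 2 / 2) * dcard k σ τ) := by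
  let g : KSet n k → Bool → ℝ := fun e b =>
    √((if b then edgeP p q σ e.1 else 1 - edgeP p q σ e.1) *
      (if b then edgeP p q τ e.1 else 1 - edgeP p q τ e.1))
  have h1 : ∀ E : KSet n k → Bool, √(hypProb p q σ E * hypProb p q τ E) = ∏ e, g e (E e) := by
    intro E
    unfold hypProb
    rw [← Finset.prod_mul_distrib, Real.sqrt_prod]
    intro e _
    have := edgeP_mem p q hp hq hp1 hq1 σ e.1
    have := edgeP_mem p q hp hq hp1 hq1 τ e.1
    apply mul_nonneg <;> split_ifs <;> linarith
  have h2 : ∑ E : KSet n k → Bool, ∏ e, g e (E e) = ∏ e, ∑ b, g e b := by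
    rw [Finset.prod_univ_sum, Fintype.piFinset_univ]
  simp_rw [h1]
  rw [h2]
  have h3 : ∀ e : KSet n k, ∑ b, g e b ≤
      if ¬ (inCluster σ e.1 ↔ inCluster τ e.1) then Real.exp (-((√p - √q) ^ 2 / 2)) else 1 := by
    intro e
    have hb := bc_le p q hp hq hp1 hq1
    have hb' := bc_le q p hq hp hq1 hp1
    have hc : (√q - √p) ^ 2 = (√p - √q) ^ 2 := by ring
    rw [hc] at hb'
    simp only [g, Fintype.sum_bool, edgeP, if_true, Bool.false_eq_true, if_false]
    by_cases a : inCluster σ e.1 <;> by_cases b : inCluster τ e.1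
    · rw [if_pos a, if_pos b, if_neg (not_not.2 (iff_of_true a b)),
        Real.sqrt_mul_self hp, Real.sqrt_mul_self (by linarith)]; linarith
    · rw [if_pos a, if_neg b, if_pos (fun h => b (h.1 a))]
      exact hb
    · rw [if_neg a, if_pos b, if_pos (fun h => a (h.2 b))]
      exact hb'
    · rw [if_neg a, if_neg b, if_neg (not_not.2 (iff_of_false a b)),
        Real.sqrt_mul_self hq, Real.sqrt_mul_self (by linarith)]; linarith
  calc ∏ e, ∑ b, g e b ≤ ∏ e : KSet n k,
      (if ¬ (inCluster σ e.1 ↔ inCluster τ e.1) then Real.exp (-((√p - √q) ^ 2 / 2)) else 1) := by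
        apply Finset.prod_le_prod
        · intro e _
          exact Finset.sum_nonneg (fun b _ => Real.sqrt_nonneg _)
        · intro e _; exact h3 e
    _ = _ := by
        rw [← Finset.prod_filter, Finset.prod_const, mul_comm, Real.exp_nat_mul]
        rfl

lemma dcard_ge {m k : ℕ} (hk : 2 ≤ k) (σ τ : Fin (2 * m) → Bool) (hσ : balanced σ)
    (hτ : balanced τ) : ∃ r, (univ.filter (fun i => σ i ≠ τ i)).card = 2 * r ∧ r ≤ m ∧
      2 * r * (2 * (m - r).choose (k - 1)) ≤ dcard k σ τ := by
  let A : Bool → Bool → Finset (Fin (2 * m)) := fun a b => univ.filter (fun i => σ i = a ∧ τ i = b)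
  have e1 : (univ.filter (fun i => σ i = true)).card = (A true true).card + (A true false).card := by
    rw [← Finset.card_union_of_disjoint]
    · congr 1; ext i; simp [A]; cases τ i <;> simp
    · rw [Finset.disjoint_left]; intro i; simp [A]; intro _ h; simp [h]
  have e2 : (univ.filter (fun i => τ i = true)).card = (A true true).card + (A false true).card := by
    rw [← Finset.card_union_of_disjoint]
    · congr 1; ext i; simp [A]; cases σ i <;> simp
    · rw [Finset.disjoint_left]; intro i; simp [A]; intro h; simp [h]
  have e3 : (univ.filter (fun i => σ i ≠ τ i)).card = (A true false).card + (A false true).card := by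
    rw [← Finset.card_union_of_disjoint]
    · congr 1; ext i; simp [A]; cases σ i <;> cases τ i <;> simp
    · rw [Finset.disjoint_left]; intro i; simp [A]; intro h; simp [h]
  have e4 : (univ.filter (fun i => ¬ σ i ≠ τ i)).card = (A true true).card + (A false false).card := by
    rw [← Finset.card_union_of_disjoint]
    · congr 1; ext i; simp [A]; cases σ i <;> cases τ i <;> simp
    · rw [Finset.disjoint_left]; intro i; simp [A]; intro h; simp [h]
  have e5 : (univ.filter (fun i => σ i ≠ τ i)).card + (univ.filter (fun i => ¬ σ i ≠ τ i)).card
      = 2 * m := by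
    rw [Finset.card_filter_add_card_filter_not]; simp
  unfold balanced at hσ hτ
  refine ⟨(A true false).card, by omega, by omega, ?_⟩
  have f1 : (A true true).card = m - (A true false).card := by omega
  have f2 : (A false false).card = m - (A true false).card := by omega
  set r := (A true false).card with hr
  let B := univ.filter (fun i => σ i ≠ τ i)
  let P := (A true true).powersetCard (k-1) ∪ (A false false).powersetCard (k-1)
  have hP : P.card = 2 * (m - r).choose (k-1) := by
    rw [Finset.card_union_of_disjoint, Finset.card_powersetCard, Finset.card_powersetCard, f1, f2]
    · ring
    · rw [Finset.disjoint_left]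
      intro S h1 h2
      rw [Finset.mem_powersetCard] at h1 h2
      obtain ⟨x, hx⟩ : S.Nonempty := by rw [← Finset.card_pos]; omega
      have a1 := h1.1 hx
      have a2 := h2.1 hx
      simp [A] at a1 a2
      simp [a1] at a2
  have hPc : ∀ S ∈ P, S.card = k - 1 ∧ ∃ c, ∀ i ∈ S, σ i = c ∧ τ i = c := by
    intro S hS
    rcases Finset.mem_union.1 hS with h | h <;> rw [Finset.mem_powersetCard] at h
    · exact ⟨h.2, true, fun i hi => by simpa [A] using h.1 hi⟩
    · exact ⟨h.2, false, fun i hi => by simpa [A] using h.1 hi⟩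
  have hB : B.card = 2 * r := by simp only [B]; omega
  rw [← hB, ← hP, ← Finset.card_product]
  have hdc : dcard k σ τ = ((univ.filter (fun e : KSet (2 * m) k =>
      ¬ (inCluster σ e.1 ↔ inCluster τ e.1))).map (Function.Embedding.subtype _)).card := by
    rw [Finset.card_map]; rfl
  rw [hdc]
  apply Finset.card_le_card_of_injOn (fun x => insert x.1 x.2)
  · rintro ⟨x, S⟩ hx
    simp only [Finset.coe_product, Set.mem_prod, Finset.mem_coe] at hx
    obtain ⟨hx, hS⟩ := hx
    obtain ⟨hc, c, hS⟩ := hPc S hS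
    simp only [B, mem_filter, mem_univ, true_and] at hx
    have hxS : x ∉ S := fun h => hx (by rw [(hS x h).1, (hS x h).2])
    have hcard : (insert x S).card = k := by rw [Finset.card_insert_of_notMem hxS]; omega
    have key : ∀ ρ : Fin (2 * m) → Bool, (∀ i ∈ S, ρ i = c) → (inCluster ρ (insert x S) ↔ ρ x = c) := by
      intro ρ hρ
      obtain ⟨y, hy⟩ : S.Nonempty := by rw [← Finset.card_pos]; omega
      constructor
      · intro h
        rw [h x (by simp) y (by simp [hy]), hρ y hy]
      · intro h
        have : ∀ i ∈ insert x S, ρ i = c := by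
          intro i hi
          rcases Finset.mem_insert.1 hi with rfl | hi
          · exact h
          · exact hρ i hi
        intro i hi j hj
        rw [this i hi, this j hj]
    simp only [Finset.coe_map, Set.mem_image, Finset.mem_coe, mem_filter, mem_univ, true_and]
    refine ⟨⟨insert x S, hcard⟩, ?_, rfl⟩
    rw [key σ (fun i hi => (hS i hi).1), key τ (fun i hi => (hS i hi).2)]
    revert hx
    cases σ x <;> cases τ x <;> cases c <;> simp
  · rintro ⟨x, S⟩ hx ⟨y, T⟩ hy hxy
    simp only [Finset.coe_product, Set.mem_prod, Finset.mem_coe] at hx hy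
    obtain ⟨hx, hS⟩ := hx
    obtain ⟨hy, hT⟩ := hy
    obtain ⟨-, c, hS⟩ := hPc S hS
    obtain ⟨-, c', hT⟩ := hPc T hT
    simp only [B, mem_filter, mem_univ, true_and] at hx hy
    have hxS : x ∉ S := fun h => hx (by rw [(hS x h).1, (hS x h).2])
    have hyT : y ∉ T := fun h => hy (by rw [(hT y h).1, (hT y h).2])
    have hxT : x ∉ T := fun h => hx (by rw [(hT x h).1, (hT x h).2])
    simp only at hxy
    have : x ∈ insert y T := by rw [← hxy]; simp
    have hxy' : x = y := by
      rcases Finset.mem_insert.1 this with h | h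
      · exact h
      · exact absurd h hxT
    subst hxy'
    have : S = T := by
      rw [← Finset.erase_insert hxS, hxy, Finset.erase_insert hyT]
    rw [this]

lemma inCluster_negB {n : ℕ} (σ : Fin n → Bool) (e : Finset (Fin n)) :
    inCluster (negB σ) e ↔ inCluster σ e := by
  simp [inCluster, negB]

lemma hypProb_negB {n k : ℕ} (p q : ℝ) (σ : Fin n → Bool) (E : KSet n k → Bool) :
    hypProb p q (negB σ) E = hypProb p q σ E := by
  unfold hypProb edgeP
  simp only [inCluster_negB]

lemma balanced_negB {n : ℕ} (σ : Fin n → Bool) (h : balanced σ) : balanced (negB σ) := by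
  unfold balanced at *
  have e := Finset.card_filter_add_card_filter_not (s := (univ : Finset (Fin n)))
    (fun i => σ i = true)
  have : (univ.filter (fun i => negB σ i = true)) = univ.filter (fun i => ¬ σ i = true) := by
    ext i; simp [negB]
  rw [this]
  simp only [Finset.card_univ, Fintype.card_fin] at e
  omega

lemma dist_negB {n : ℕ} (σ τ : Fin n → Bool) :
    (univ.filter (fun i => σ i ≠ τ i)).card + (univ.filter (fun i => σ i ≠ negB τ i)).card = n := by
  have e := Finset.card_filter_add_card_filter_not (s := (univ : Finset (Fin n)))
    (fun i => σ i ≠ τ i)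
  have : (univ.filter (fun i => σ i ≠ negB τ i)) = univ.filter (fun i => ¬ σ i ≠ τ i) := by
    ext i; simp [negB]
  rw [this, e]; simp

lemma sum_sigProb_le (n : ℕ) : ∑ σ, sigProb n σ ≤ 1 := by
  unfold sigProb
  rw [← Finset.sum_filter, Finset.sum_const, nsmul_eq_mul, mul_one_div]
  exact div_self_le_one _

lemma sigProb_nonneg (n : ℕ) (σ : Fin n → Bool) : 0 ≤ sigProb n σ := by
  unfold sigProb
  split_ifs <;> positivity

/-- Maximum likelihood estimator. -/
lemma exists_est (m k : ℕ) (p q : ℝ) : ∃ est : (KSet (2 * m) k → Bool) → (Fin (2 * m) → Bool),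
    ∀ E σ, balanced σ → balanced (est E) ∧ hypProb p q σ E ≤ hypProb p q (est E) E := by
  have : ∀ E : KSet (2 * m) k → Bool, ∃ τ : Fin (2 * m) → Bool, ∀ σ, balanced σ →
      balanced τ ∧ hypProb p q σ E ≤ hypProb p q τ E := by
    intro E
    by_cases h : (univ.filter (fun τ : Fin (2 * m) → Bool => balanced τ)).Nonempty
    · obtain ⟨τ, h1, h2⟩ := Finset.exists_max_image _ (fun τ => hypProb p q τ E) h
      refine ⟨τ, fun σ hσ => ⟨by simpa using h1, h2 σ (by simpa using hσ)⟩⟩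
    · refine ⟨fun _ => true, fun σ hσ => absurd ⟨σ, by simpa using hσ⟩ h⟩
  choose est h using this
  exact ⟨est, h⟩

lemma sum_dist {n : ℕ} (σ : Fin n → Bool) (x : ℝ) :
    ∑ τ : Fin n → Bool, x ^ (univ.filter (fun i => σ i ≠ τ i)).card = (1 + x) ^ n := by
  have h : ∀ τ : Fin n → Bool, x ^ (univ.filter (fun i => σ i ≠ τ i)).card =
      ∏ i, (if σ i ≠ τ i then x else 1) := by
    intro τ
    rw [← Finset.prod_filter, Finset.prod_const]
  simp_rw [h]
  have h2 : ∑ τ : Fin n → Bool, ∏ i, (if σ i ≠ τ i then x else 1) =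
      ∏ i, ∑ b : Bool, (if σ i ≠ b then x else 1) := by
    rw [Finset.prod_univ_sum, Fintype.piFinset_univ]
  rw [h2]
  have h3 : ∀ i, ∑ b : Bool, (if σ i ≠ b then x else 1) = 1 + x := by
    intro i
    cases σ i <;> simp [add_comm]
  rw [Finset.prod_congr rfl (fun i _ => h3 i)]
  simp

/-- Abstract union bound. -/
lemma prEvent_le {m k : ℕ} (p q : ℝ) (hp : 0 ≤ p) (hq : 0 ≤ q) (hp1 : p ≤ 1) (hq1 : q ≤ 1)
    (est : (KSet (2 * m) k → Bool) → (Fin (2 * m) → Bool))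
    (hest : ∀ E σ, balanced σ → balanced (est E) ∧ hypProb p q σ E ≤ hypProb p q (est E) E)
    (x y : ℝ) (hx : 0 ≤ x) (hy : 0 ≤ y)
    (hb : ∀ σ τ : Fin (2 * m) → Bool, balanced σ → balanced τ → σ ≠ τ →
      (univ.filter (fun i => σ i ≠ τ i)).card ≤ m →
      Real.exp (-((√p - √q) ^ 2 / 2) * dcard k σ τ) ≤
        x ^ (univ.filter (fun i => σ i ≠ τ i)).card + y) :
    prEvent (2 * m) k p q (fun σ E => est E ≠ σ ∧ est E ≠ negB σ) ≤
      ((1 + x) ^ (2 * m) - 1) + 2 ^ (2 * m) * y := by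
  set R := ((1 + x) ^ (2 * m) - 1) + 2 ^ (2 * m) * y with hR
  have hR0 : 0 ≤ R := by
    have : 1 ≤ (1 + x) ^ (2 * m) := one_le_pow₀ (by linarith)
    have : 0 ≤ 2 ^ (2 * m) * y := by positivity
    linarith
  have main : ∀ σ : Fin (2 * m) → Bool, balanced σ →
      ∑ E : KSet (2 * m) k → Bool, hypProb p q σ E *
        (if est E ≠ σ ∧ est E ≠ negB σ then 1 else 0) ≤ R := by
    intro σ hσ
    let T := univ.filter (fun τ : Fin (2 * m) → Bool => balanced τ ∧ σ ≠ τ ∧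
      (univ.filter (fun i => σ i ≠ τ i)).card ≤ m)
    have s1 : ∀ E : KSet (2 * m) k → Bool, hypProb p q σ E *
        (if est E ≠ σ ∧ est E ≠ negB σ then 1 else 0) ≤
        ∑ τ ∈ T, √(hypProb p q σ E * hypProb p q τ E) := by
      intro E
      have hnn : ∀ τ ∈ T, 0 ≤ √(hypProb p q σ E * hypProb p q τ E) :=
        fun τ _ => Real.sqrt_nonneg _
      split_ifs with hf
      · obtain ⟨τ, hτT, hτ⟩ : ∃ τ ∈ T, hypProb p q σ E ≤ hypProb p q τ E := by
          obtain ⟨h1, h2⟩ := hest E σ hσ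
          by_cases hd : (univ.filter (fun i => σ i ≠ est E i)).card ≤ m
          · refine ⟨est E, ?_, h2⟩
            simp only [T, mem_filter, mem_univ, true_and]
            exact ⟨h1, fun h => hf.1 h.symm, hd⟩
          · refine ⟨negB (est E), ?_, by rw [hypProb_negB]; exact h2⟩
            simp only [T, mem_filter, mem_univ, true_and]
            refine ⟨balanced_negB _ h1, ?_, ?_⟩
            · intro h
              apply hf.2
              rw [h]; funext i; simp [negB]
            · have := dist_negB σ (est E)
              omega
        have h0 := hypProb_nonneg p q hp hq hp1 hq1 σ E
        refine le_trans ?_ (Finset.single_le_sum hnn hτT)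
        rw [mul_one]
        apply Real.le_sqrt_of_sq_le
        nlinarith
      · rw [mul_zero]; exact Finset.sum_nonneg hnn
    calc _ ≤ ∑ E : KSet (2 * m) k → Bool, ∑ τ ∈ T, √(hypProb p q σ E * hypProb p q τ E) :=
          Finset.sum_le_sum (fun E _ => s1 E)
      _ = ∑ τ ∈ T, ∑ E : KSet (2 * m) k → Bool, √(hypProb p q σ E * hypProb p q τ E) :=
          Finset.sum_comm
      _ ≤ ∑ τ ∈ T, (x ^ (univ.filter (fun i => σ i ≠ τ i)).card + y) := by
          apply Finset.sum_le_sum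
          intro τ hτ
          simp only [T, mem_filter, mem_univ, true_and] at hτ
          exact (sum_sqrt_le p q hp hq hp1 hq1 σ τ).trans (hb σ τ hσ hτ.1 hτ.2.1 hτ.2.2)
      _ ≤ ∑ τ ∈ univ.erase σ, (x ^ (univ.filter (fun i => σ i ≠ τ i)).card + y) := by
          apply Finset.sum_le_sum_of_subset_of_nonneg
          · intro τ hτ
            simp only [T, mem_filter, mem_univ, true_and] at hτ
            simp only [mem_erase, mem_univ, and_true]
            exact hτ.2.1.symm
          · intros; positivity
      _ = (∑ τ ∈ univ.erase σ, x ^ (univ.filter (fun i => σ i ≠ τ i)).card) +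
            ∑ τ ∈ univ.erase σ, y := Finset.sum_add_distrib
      _ ≤ R := by
          have a1 := sum_dist σ x
          rw [← Finset.add_sum_erase _ _ (mem_univ σ)] at a1
          simp only [ne_eq, not_true, Finset.filter_false, Finset.card_empty, pow_zero] at a1
          have a2 : ∑ τ ∈ univ.erase σ, y ≤ 2 ^ (2 * m) * y := by
            calc ∑ τ ∈ univ.erase σ, y ≤ ∑ τ : Fin (2 * m) → Bool, y := by
                  apply Finset.sum_le_sum_of_subset_of_nonneg (Finset.erase_subset _ _)
                  intros; exact hy
              _ = _ := by simp
          simp only [ne_eq]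
          linarith
  unfold prEvent
  calc _ = ∑ σ : Fin (2 * m) → Bool, sigProb (2 * m) σ * ∑ E : KSet (2 * m) k → Bool,
        hypProb p q σ E * (if est E ≠ σ ∧ est E ≠ negB σ then 1 else 0) := by
          apply Finset.sum_congr rfl
          intro σ _
          rw [Finset.mul_sum]
          apply Finset.sum_congr rfl
          intro E _
          ring_nf
    _ ≤ ∑ σ : Fin (2 * m) → Bool, sigProb (2 * m) σ * R := by
          apply Finset.sum_le_sum
          intro σ _
          by_cases hσ : balanced σ
          · exact mul_le_mul_of_nonneg_left (main σ hσ) (sigProb_nonneg _ _)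
          · have : sigProb (2 * m) σ = 0 := by unfold sigProb; rw [if_neg hσ]
            rw [this]; simp
    _ ≤ R := by
          rw [← Finset.sum_mul]
          have := sum_sigProb_le (2 * m)
          nlinarith

lemma ratio_le (m r s : ℕ) (ρ : ℝ) (hρ : 0 ≤ ρ) (hrs : r + s ≤ m)
    (h : ρ * (2 * m) ≤ (m : ℝ) - r - s) :
    ρ ^ s * ((2 * m - 1).choose s : ℝ) ≤ ((m - r).choose s : ℝ) := by
  have h1 : (((m - r + 1 - s : ℕ) : ℝ) ^ s) ≤ (s.factorial : ℝ) * (m - r).choose s := by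
    exact_mod_cast Nat.pow_sub_le_descFactorial (m - r) s |>.trans
      (Nat.descFactorial_eq_factorial_mul_choose (m - r) s).le
  have h2 : (s.factorial : ℝ) * ((2 * m - 1).choose s : ℝ) ≤ (2 * m : ℝ) ^ s := by
    have a : s.factorial * (2 * m - 1).choose s ≤ (2 * m) ^ s := by
      rw [← Nat.descFactorial_eq_factorial_mul_choose]
      exact (Nat.descFactorial_le_pow _ _).trans (Nat.pow_le_pow_left (by omega) _)
    exact_mod_cast a
  have h3 : ((m - r + 1 - s : ℕ) : ℝ) ≥ ρ * (2 * m) := by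
    have e : m - r + 1 - s + r + s = m + 1 := by omega
    have e' : ((m - r + 1 - s : ℕ) : ℝ) + r + s = m + 1 := by exact_mod_cast e
    linarith
  have h4 : (ρ * (2 * m)) ^ s ≤ ((m - r + 1 - s : ℕ) : ℝ) ^ s :=
    pow_le_pow_left₀ (by positivity) h3 s
  rw [mul_pow] at h4
  have h5 : ρ ^ s * ((s.factorial : ℝ) * ((2 * m - 1).choose s : ℝ)) ≤ ρ ^ s * (2 * m : ℝ) ^ s :=
    mul_le_mul_of_nonneg_left h2 (by positivity)
  have h6 : (s.factorial : ℝ) * (ρ ^ s * ((2 * m - 1).choose s : ℝ)) ≤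
      (s.factorial : ℝ) * (m - r).choose s := by
    calc _ = ρ ^ s * ((s.factorial : ℝ) * ((2 * m - 1).choose s : ℝ)) := by ring
      _ ≤ _ := h5.trans (h4.trans h1)
  exact le_of_mul_le_mul_left h6 (by positivity)

lemma tendsto_two_mul : Tendsto (fun m : ℕ => (2 * m : ℝ)) atTop atTop :=
  Tendsto.const_mul_atTop (by norm_num) tendsto_natCast_atTop_atTop

lemma pParam_le_one (k : ℕ) (hk : 2 ≤ k) (α : ℝ) (hα : 0 < α) :
    ∀ᶠ m : ℕ in atTop, 0 ≤ pParam k α (2 * m) ∧ pParam k α (2 * m) ≤ 1 := by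
  obtain ⟨s, rfl⟩ : ∃ s, k = s + 1 := ⟨k - 1, by omega⟩
  have hl := (Real.isLittleO_log_id_atTop.comp_tendsto tendsto_two_mul).bound
    (c := 1 / (2 * α * s.factorial)) (by positivity)
  filter_upwards [hl, eventually_ge_atTop (s + 1)] with m h1 hm
  unfold pParam
  simp only [Function.comp, id, Real.norm_eq_abs, Nat.add_sub_cancel] at h1 ⊢
  have hm' : (1 : ℝ) ≤ m := by exact_mod_cast (by omega : 1 ≤ m)
  have hlog : 0 ≤ Real.log (2 * m) := Real.log_nonneg (by linarith)
  rw [abs_of_nonneg hlog, abs_of_nonneg (by linarith)] at h1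
  push_cast
  refine ⟨by positivity, ?_⟩
  have hc : m ≤ s.factorial * (2 * m - 1).choose s := by
    rw [← Nat.descFactorial_eq_factorial_mul_choose]
    calc m = m ^ 1 := by simp
      _ ≤ m ^ s := Nat.pow_le_pow_right (by omega) (by omega)
      _ ≤ (2 * m - 1 + 1 - s) ^ s := Nat.pow_le_pow_left (by omega) _
      _ ≤ _ := Nat.pow_sub_le_descFactorial _ _
  have hc' : (m : ℝ) ≤ s.factorial * (2 * m - 1).choose s := by exact_mod_cast hc
  apply div_le_one_of_le₀ _ (by positivity)
  have hf : (0 : ℝ) < s.factorial := by positivity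
  have h2 : α * Real.log (2 * m) * s.factorial ≤ m := by
    calc α * Real.log (2 * m) * s.factorial ≤
        α * (1 / (2 * α * s.factorial) * (2 * m)) * s.factorial := by gcongr
      _ = m := by field_simp
  have h3 : s.factorial * (α * Real.log (2 * m)) ≤ s.factorial * ((2 * m - 1).choose s : ℝ) := by
    linarith
  exact le_of_mul_le_mul_left h3 hf

lemma sqrt_param (k m : ℕ) (α β : ℝ) (hα : 0 < α) (hβ : 0 < β) (hm : 1 ≤ m) :
    (√(pParam k α (2 * m)) - √(pParam k β (2 * m))) ^ 2 =
      (√α - √β) ^ 2 * Real.log (2 * m) / ((2 * m - 1).choose (k - 1) : ℝ) := by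
  have hm' : (1 : ℝ) ≤ m := by exact_mod_cast hm
  have hlog : 0 ≤ Real.log (2 * m) := Real.log_nonneg (by linarith)
  unfold pParam
  push_cast
  rw [mul_div_assoc, mul_div_assoc, Real.sqrt_mul hα.le, Real.sqrt_mul hβ.le, ← sub_mul, mul_pow,
    Real.sq_sqrt (by positivity), mul_div_assoc]

lemma exists_delta (s : ℕ) (J : ℝ) (hJ : 1 < J / 2 ^ s) :
    ∃ δ : ℝ, 0 < δ ∧ δ < 1 / 4 ∧ 1 < J * ((1 - 2 * δ) / 2) ^ s := by
  have hc : Tendsto (fun δ : ℝ => J * ((1 - 2 * δ) / 2) ^ s) (nhdsWithin 0 (Set.Ioi 0))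
      (nhds (J * ((1 - 2 * 0) / 2) ^ s)) := by
    apply Tendsto.mono_left _ nhdsWithin_le_nhds
    apply Continuous.tendsto
    fun_prop
  have h1 : 1 < J * ((1 - 2 * 0) / 2) ^ s := by
    have : J * ((1 - 2 * 0) / 2) ^ s = J / 2 ^ s := by
      rw [mul_zero, sub_zero, div_pow, one_pow, mul_one_div]
    rw [this]; exact hJ
  have e1 := hc.eventually (lt_mem_nhds h1)
  have e2 : ∀ᶠ δ : ℝ in nhdsWithin 0 (Set.Ioi 0), δ < 1 / 4 :=
    nhdsWithin_le_nhds (gt_mem_nhds (by norm_num))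
  obtain ⟨δ, ⟨h1, h2⟩, h3⟩ := ((e1.and e2).and self_mem_nhdsWithin).exists
  exact ⟨δ, h3, h2, h1⟩

lemma term_bound (k m : ℕ) (hk : 2 ≤ k) (α β δ : ℝ) (hα : 0 < α) (hβ : 0 < β)
    (hδ : 0 < δ) (hδ4 : δ < 1 / 4) (hm : 1 ≤ m) (hmδ : ((k - 1 : ℕ) : ℝ) ≤ δ * m)
    (σ τ : Fin (2 * m) → Bool) (hσ : balanced σ) (hτ : balanced τ)
    (hd : (univ.filter (fun i => σ i ≠ τ i)).card ≤ m) :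
    Real.exp (-((√(pParam k α (2 * m)) - √(pParam k β (2 * m))) ^ 2 / 2) * dcard k σ τ) ≤
      (Real.exp (-((√α - √β) ^ 2 * ((1 - 2 * δ) / 2) ^ (k - 1)) * Real.log (2 * m))) ^
          (univ.filter (fun i => σ i ≠ τ i)).card +
        Real.exp (-((√α - √β) ^ 2 * (1 / 8) ^ (k - 1) * (2 * δ)) * m * Real.log (2 * m)) := by
  obtain ⟨r, hr, hrm, hD⟩ := dcard_ge hk σ τ hσ hτ
  rw [hr] at hd ⊢
  rw [sqrt_param k m α β hα hβ hm]
  set s := k - 1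
  set J := (√α - √β) ^ 2
  have hJ : 0 ≤ J := sq_nonneg _
  have hm' : (1 : ℝ) ≤ m := by exact_mod_cast hm
  have hlog : 0 ≤ Real.log (2 * m) := Real.log_nonneg (by linarith)
  set L := Real.log (2 * m)
  have hsm : (s : ℝ) ≤ m / 4 := by nlinarith
  have hsm' : 4 * s ≤ m := by
    have : (4 * s : ℝ) ≤ m := by linarith
    exact_mod_cast this
  have hC : (0 : ℝ) < (2 * m - 1).choose s := by
    exact_mod_cast Nat.choose_pos (by omega)
  have hDr : 2 * r * (2 * ((m - r).choose s : ℝ)) ≤ dcard k σ τ := by exact_mod_cast hD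
  have hr2 : (r : ℝ) ≤ m / 2 := by
    have : (2 * r : ℝ) ≤ m := by exact_mod_cast hd
    linarith
  -- generic exponent bound
  have gen : ∀ ρ : ℝ, 0 ≤ ρ → ρ * (2 * m) ≤ (m : ℝ) - r - s →
      J * ρ ^ s * L * (2 * r) ≤ J * L / ((2 * m - 1).choose s : ℝ) / 2 * dcard k σ τ := by
    intro ρ hρ h
    have h1 := ratio_le m r s ρ hρ (by omega) h
    have h2 : ρ ^ s ≤ ((m - r).choose s : ℝ) / (2 * m - 1).choose s := by
      rw [le_div_iff₀ hC]; exact h1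
    calc J * ρ ^ s * L * (2 * r) ≤
        J * (((m - r).choose s : ℝ) / (2 * m - 1).choose s) * L * (2 * r) := by gcongr
      _ = J * L / ((2 * m - 1).choose s : ℝ) / 2 * (2 * r * (2 * ((m - r).choose s : ℝ))) := by
          field_simp
      _ ≤ _ := by gcongr
  by_cases hreg : (r : ℝ) ≤ δ * m
  · have g := gen ((1 - 2 * δ) / 2) (by linarith) (by nlinarith)
    have : Real.exp (-(J * L / ((2 * m - 1).choose s : ℝ) / 2) * dcard k σ τ) ≤
        (Real.exp (-(J * ((1 - 2 * δ) / 2) ^ s) * L)) ^ (2 * r) := by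
      rw [← Real.exp_nat_mul]
      apply Real.exp_le_exp.2
      push_cast
      linarith
    exact this.trans (le_add_of_nonneg_right (Real.exp_pos _).le)
  · have g := gen (1 / 8) (by norm_num) (by linarith)
    have : Real.exp (-(J * L / ((2 * m - 1).choose s : ℝ) / 2) * dcard k σ τ) ≤
        Real.exp (-(J * (1 / 8) ^ s * (2 * δ)) * m * L) := by
      apply Real.exp_le_exp.2
      have : J * (1 / 8) ^ s * L * (2 * (δ * m)) ≤ J * (1 / 8) ^ s * L * (2 * r) := by
        have := (not_le.1 hreg).le
        gcongr
      linarith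
    exact this.trans (le_add_of_nonneg_left (by positivity))

lemma limit_one (I : ℝ) (hI : 1 < I) :
    Tendsto (fun m : ℕ => (1 + Real.exp (-I * Real.log (2 * m))) ^ (2 * m) - 1) atTop (nhds 0) := by
  have hlog : Tendsto (fun m : ℕ => Real.log (2 * m)) atTop atTop :=
    Real.tendsto_log_atTop.comp tendsto_two_mul
  have h1 : Tendsto (fun m : ℕ => Real.exp (-((I - 1) * Real.log (2 * m)))) atTop (nhds 0) :=
    Real.tendsto_exp_neg_atTop_nhds_zero.comp (hlog.const_mul_atTop (by linarith))
  have h2 : Tendsto (fun m : ℕ => Real.exp (Real.exp (-((I - 1) * Real.log (2 * m)))) - 1)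
      atTop (nhds 0) := by
    have := ((Real.continuous_exp.tendsto 0).comp h1).sub_const 1
    simpa using this
  refine squeeze_zero' ?_ ?_ h2
  · filter_upwards with m
    have : 1 ≤ (1 + Real.exp (-I * Real.log (2 * m))) ^ (2 * m) :=
      one_le_pow₀ (by linarith [Real.exp_pos (-I * Real.log (2 * m))])
    linarith
  · filter_upwards [eventually_ge_atTop 1] with m hm
    have hm' : (1 : ℝ) ≤ m := by exact_mod_cast hm
    set z := Real.exp (-I * Real.log (2 * m)) with hz
    have a1 : (1 + z) ^ (2 * m) ≤ Real.exp z ^ (2 * m) := by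
      apply pow_le_pow_left₀ (by positivity)
      linarith [Real.add_one_le_exp z]
    rw [← Real.exp_nat_mul] at a1
    have a2 : ((2 * m : ℕ) : ℝ) * z = Real.exp (-((I - 1) * Real.log (2 * m))) := by
      have : ((2 * m : ℕ) : ℝ) = Real.exp (Real.log (2 * m)) := by
        rw [Real.exp_log (by positivity)]; push_cast; ring
      rw [this, hz, ← Real.exp_add]
      congr 1; ring
    rw [a2] at a1
    linarith

lemma limit_two (c : ℝ) (hc : 0 < c) :
    Tendsto (fun m : ℕ => (2 : ℝ) ^ (2 * m) * Real.exp (-c * m * Real.log (2 * m))) atTop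
      (nhds 0) := by
  have hlog : Tendsto (fun m : ℕ => c * Real.log (2 * m)) atTop atTop :=
    (Real.tendsto_log_atTop.comp tendsto_two_mul).const_mul_atTop hc
  have h1 : Tendsto (fun m : ℕ => Real.exp (-(m : ℝ))) atTop (nhds 0) :=
    Real.tendsto_exp_neg_atTop_nhds_zero.comp tendsto_natCast_atTop_atTop
  refine squeeze_zero' ?_ ?_ h1
  · filter_upwards with m
    positivity
  · filter_upwards [hlog.eventually_ge_atTop (2 * Real.log 2 + 1)] with m hm
    have : (2 : ℝ) ^ (2 * m) = Real.exp ((2 * m : ℕ) * Real.log 2) := by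
      rw [Real.exp_nat_mul, Real.exp_log (by norm_num)]
    rw [this, ← Real.exp_add]
    apply Real.exp_le_exp.2
    push_cast
    have := mul_le_mul_of_nonneg_left hm (Nat.cast_nonneg (α := ℝ) m)
    linarith

/-- If `I(α,β) > 1` then exact recovery in `HSBM(n,p,q;k)` is possible:
there is an estimator whose failure probability vanishes as `n = 2m → ∞`. -/
theorem hsbm_exact_recovery_possible (k : ℕ) (hk : 2 ≤ k) (α β : ℝ) (hα : 0 < α) (hβ : 0 < β)
    (hI : 1 < (Real.sqrt α - Real.sqrt β) ^ 2 / 2 ^ (k - 1)) :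
    ∃ est : (m : ℕ) → (KSet (2 * m) k → Bool) → (Fin (2 * m) → Bool),
      Tendsto (fun m : ℕ =>
          prEvent (2 * m) k (pParam k α (2 * m)) (pParam k β (2 * m))
            (fun σ E => est m E ≠ σ ∧ est m E ≠ negB σ))
        atTop (nhds 0) := by
  obtain ⟨δ, hδ, hδ4, hI1⟩ := exists_delta (k - 1) ((√α - √β) ^ 2) hI
  choose est hest using fun m : ℕ => exists_est m k (pParam k α (2 * m)) (pParam k β (2 * m))
  refine ⟨est, ?_⟩
  have hJ : 0 < (√α - √β) ^ 2 := by
    rcases (sq_nonneg (√α - √β)).lt_or_eq with h | h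
    · exact h
    · rw [← h] at hI1; norm_num at hI1
  have l1 := limit_one _ hI1
  have l2 := limit_two ((√α - √β) ^ 2 * (1 / 8) ^ (k - 1) * (2 * δ)) (by positivity)
  have l3 := l1.add l2
  rw [add_zero] at l3
  refine squeeze_zero' ?_ ?_ l3
  · filter_upwards [pParam_le_one k hk α hα, pParam_le_one k hk β hβ] with m hp hq
    unfold prEvent
    refine Finset.sum_nonneg fun σ _ => Finset.sum_nonneg fun E _ => ?_
    refine mul_nonneg (mul_nonneg (sigProb_nonneg _ _)
      (hypProb_nonneg _ _ hp.1 hq.1 hp.2 hq.2 _ _)) ?_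
    split_ifs <;> norm_num
  · have hbig : ∀ᶠ m : ℕ in atTop, ((k - 1 : ℕ) : ℝ) ≤ δ * m :=
      (tendsto_natCast_atTop_atTop.const_mul_atTop hδ).eventually_ge_atTop _
    filter_upwards [pParam_le_one k hk α hα, pParam_le_one k hk β hβ, hbig,
      eventually_ge_atTop 1] with m hp hq hb hm
    apply prEvent_le _ _ hp.1 hq.1 hp.2 hq.2 (est m) (hest m) _ _ (Real.exp_pos _).le
      (Real.exp_pos _).le
    intro σ τ hσ hτ _ hd
    exact term_bound k m hk α β δ hα hβ hδ hδ4 hm hb σ τ hσ hτ hd
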